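/- Let k be a field, S and T totally ordered sets, and M a pointwise finite-dimensional, middle exact, indecomposable persistence module over S × T. Suppose there exist x ≤ x' in S and y ≤ y' in T with, setting b = (x,y'), c = (x',y), d = (x',y'), the map M_b ⊕ M_c → M_d, (m',m'') ↦ M_{db}(m') − M_{dc}(m''), not surjective. Then M ≅ k_I for a block I of type (bb), i.e., I = J_S × J_T with J_S ⊆ S and J_T ⊆ T interval filters. -/

import Mathlib

namespace PMod

variable (k : Type) [Field k]

/-- A persistence module over a preordered set `P` with values in `k`-vector spaces. -/
structure PersistenceModule (P : Type) [Preorder P] where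
  V : P → Type
  [addCommGroup : ∀ x, AddCommGroup (V x)]
  [module : ∀ x, Module k (V x)]
  map : ∀ {x y : P}, x ≤ y → (V x →ₗ[k] V y)
  map_refl : ∀ x : P, map (le_refl x) = LinearMap.id
  map_trans : ∀ {x y z : P} (hxy : x ≤ y) (hyz : y ≤ z),
      map (le_trans hxy hyz) = (map hyz).comp (map hxy)

attribute [instance] PersistenceModule.addCommGroup PersistenceModule.module

variable {k}

/-- A morphism of persistence modules. -/
structure Hom {P : Type} [Preorder P] (M N : PersistenceModule k P) where
  app : ∀ x, M.V x →ₗ[k] N.V x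
  natural : ∀ {x y : P} (h : x ≤ y), (N.map h).comp (app x) = (app y).comp (M.map h)

/-- A morphism of persistence modules is an isomorphism iff it is pointwise bijective. -/
def IsIsoHom {P : Type} [Preorder P] {M N : PersistenceModule k P} (f : Hom M N) : Prop :=
  ∀ x, Function.Bijective (f.app x)

/-- Two persistence modules are isomorphic if there is a pointwise bijective
morphism between them. -/
def Isomorphic {P : Type} [Preorder P] (M N : PersistenceModule k P) : Prop :=
  ∃ f : Hom M N, IsIsoHom f

/-- The direct sum of a family of persistence modules, taken pointwise
(`Π₀` is the finitely supported product, i.e. the direct sum). -/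
noncomputable def directSum {P : Type} [Preorder P] {ι : Type}
    (N : ι → PersistenceModule k P) : PersistenceModule k P where
  V x := Π₀ i, (N i).V x
  map {x y} h := DFinsupp.mapRange.linearMap (fun i => (N i).map h)
  map_refl x := by
    have h : (fun i => (N i).map (le_refl x)) =
        fun i => (LinearMap.id : (N i).V x →ₗ[k] (N i).V x) :=
      funext fun i => (N i).map_refl x
    rw [h]
    exact DFinsupp.mapRange.linearMap_id
  map_trans {x y z} hxy hyz := by
    have h : (fun i => (N i).map (le_trans hxy hyz)) =
        fun i => ((N i).map hyz).comp ((N i).map hxy) :=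
      funext fun i => (N i).map_trans hxy hyz
    rw [h]
    exact DFinsupp.mapRange.linearMap_comp _ _

/-- The binary direct sum of two persistence modules, taken pointwise. -/
def sum2 {P : Type} [Preorder P] (M N : PersistenceModule k P) : PersistenceModule k P where
  V x := M.V x × N.V x
  map h := (M.map h).prodMap (N.map h)
  map_refl x := by
    rw [M.map_refl, N.map_refl]
    exact LinearMap.prodMap_id
  map_trans hxy hyz := by
    rw [M.map_trans hxy hyz, N.map_trans hxy hyz]
    exact (LinearMap.prodMap_comp _ _ _ _).symm

/-- The zero persistence module predicate. -/
def IsZero {P : Type} [Preorder P] (M : PersistenceModule k P) : Prop :=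
  ∀ x, ∀ v : M.V x, v = 0

/-- A persistence module is indecomposable if it is nonzero and whenever it is
isomorphic to a direct sum of two modules, one of the summands is zero. -/
def Indecomposable {P : Type} [Preorder P] (M : PersistenceModule k P) : Prop :=
  ¬ IsZero M ∧ ∀ M' M'' : PersistenceModule k P,
    Isomorphic M (sum2 M' M'') → IsZero M' ∨ IsZero M''

variable (k)

/-- A subset of a preordered set is convex. -/
def IsConvex {P : Type} [Preorder P] (I : Set P) : Prop :=
  ∀ p q r : P, p ≤ q → q ≤ r → p ∈ I → r ∈ I → q ∈ I

open Classical in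
/-- The fibre of the interval module `k_I` at `x`: a copy of `k` if `x ∈ I`, else `0`. -/
noncomputable def kMod {P : Type} [Preorder P] (I : Set P) (x : P) : Submodule k k :=
  if x ∈ I then ⊤ else ⊥

/-- The canonical generator of the fibre of the interval module at a point of `I`. -/
noncomputable def kGen {P : Type} [Preorder P] {I : Set P} {x : P} (hx : x ∈ I) :
    kMod k I x :=
  ⟨1, by simp [kMod, hx]⟩

open Classical in
/-- The structure maps of the interval module. -/
noncomputable def intervalMap {P : Type} [Preorder P] (I : Set P) {x y : P} (_ : x ≤ y) :
    kMod k I x →ₗ[k] kMod k I y where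
  toFun m := if hy : y ∈ I then ⟨(m : k), by simp [kMod, hy]⟩ else 0
  map_add' a b := by
    by_cases hy : y ∈ I <;> simp [hy]
  map_smul' c a := by
    by_cases hy : y ∈ I <;> simp [hy]

theorem kMod_coe_eq_zero {P : Type} [Preorder P] {I : Set P} {x : P} (hx : x ∉ I)
    (m : kMod k I x) : (m : k) = 0 := by
  have hm := m.2
  simp only [kMod, if_neg hx, Submodule.mem_bot] at hm
  exact hm

/-- The interval module `k_I` of a convex subset `I ⊆ P`: one-dimensional with
identity structure maps on `I`, and zero outside of `I`. -/
noncomputable def intervalModule {P : Type} [Preorder P] (I : Set P) (hI : IsConvex I) :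
    PersistenceModule k P where
  V x := kMod k I x
  map h := intervalMap k I h
  map_refl x := by
    ext m
    by_cases hx : x ∈ I
    · simp [intervalMap, hx]
    · simp [intervalMap, hx, kMod_coe_eq_zero k hx m]
  map_trans {x y z} hxy hyz := by
    ext m
    by_cases hz : z ∈ I
    · by_cases hy : y ∈ I
      · simp [intervalMap, hz, hy]
      · have hx : x ∉ I := fun hx => hy (hI x y z hxy hyz hx hz)
        simp [intervalMap, hz, hy, kMod_coe_eq_zero k hx m]
    · by_cases hy : y ∈ I <;> simp [intervalMap, hz, hy]

/-- The constant persistence module `k_P` with value `k` everywhere. -/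
def constModule (P : Type) [Preorder P] : PersistenceModule k P where
  V _ := k
  map _ := LinearMap.id
  map_refl _ := rfl
  map_trans _ _ := rfl

variable {k}

/-- Connectedness of a subset of a preordered set: any two points are joined by
a finite zigzag of comparable points inside the subset. -/
def IsConn {P : Type} [Preorder P] (I : Set P) : Prop :=
  ∀ p ∈ I, ∀ q ∈ I, ∃ (n : ℕ) (r : ℕ → P), r 0 = p ∧ r n = q ∧ (∀ i ≤ n, r i ∈ I) ∧
    ∀ i < n, r i ≤ r (i + 1) ∨ r (i + 1) ≤ r i

/-- An interval in a poset: a nonempty convex connected subset. -/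
def IsInterval {P : Type} [Preorder P] (I : Set P) : Prop :=
  I.Nonempty ∧ IsConvex I ∧ IsConn I

/-- An ideal: a subset closed under going down. -/
def IsIdeal {P : Type} [Preorder P] (I : Set P) : Prop :=
  ∀ p q : P, p ≤ q → q ∈ I → p ∈ I

/-- A filter: a subset closed under going up. -/
def IsFilter {P : Type} [Preorder P] (I : Set P) : Prop :=
  ∀ p q : P, p ≤ q → p ∈ I → q ∈ I

/-- An interval in a totally ordered set: a nonempty convex subset. -/
def IsIntervalLin {P : Type} [Preorder P] (I : Set P) : Prop :=
  I.Nonempty ∧ IsConvex I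

theorem IsConvex.prod {S T : Type} [Preorder S] [Preorder T] {A : Set S} {B : Set T}
    (hA : IsConvex A) (hB : IsConvex B) : IsConvex (A ×ˢ B) := by
  intro p q r hpq hqr hp hr
  exact ⟨hA _ _ _ hpq.1 hqr.1 hp.1 hr.1, hB _ _ _ hpq.2 hqr.2 hp.2 hr.2⟩

theorem isConvex_univ {P : Type} [Preorder P] : IsConvex (Set.univ : Set P) :=
  fun _ _ _ _ _ _ _ => trivial

/-- A block in the product of two totally ordered sets. -/
def IsBlock {S T : Type} [LinearOrder S] [LinearOrder T] (I : Set (S × T)) : Prop :=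
  I.Nonempty ∧ (
    (∃ JS JT, IsIntervalLin JS ∧ IsIdeal JS ∧ IsIntervalLin JT ∧ IsIdeal JT ∧ I = JS ×ˢ JT) ∨
    (∃ JS JT, IsIntervalLin JS ∧ IsFilter JS ∧ IsIntervalLin JT ∧ IsFilter JT ∧ I = JS ×ˢ JT) ∨
    (∃ JS, IsIntervalLin JS ∧ I = JS ×ˢ (Set.univ : Set T)) ∨
    (∃ JT, IsIntervalLin JT ∧ I = (Set.univ : Set S) ×ˢ JT))

theorem IsBlock.isConvex {S T : Type} [LinearOrder S] [LinearOrder T] {I : Set (S × T)}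
    (h : IsBlock I) : IsConvex I := by
  obtain ⟨-, h | h | h | h⟩ := h
  · obtain ⟨JS, JT, hS, -, hT, -, rfl⟩ := h
    exact hS.2.prod hT.2
  · obtain ⟨JS, JT, hS, -, hT, -, rfl⟩ := h
    exact hS.2.prod hT.2
  · obtain ⟨JS, hS, rfl⟩ := h
    exact hS.2.prod isConvex_univ
  · obtain ⟨JT, hT, rfl⟩ := h
    exact isConvex_univ.prod hT.2

/-- Convexity is inherited by preimages in a subposet. -/
theorem IsConvex.preimage {P : Type} [Preorder P] {J : Set P} (hJ : IsConvex J)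
    (Q : Set P) : IsConvex {p : Q | (p : P) ∈ J} :=
  fun p q r hpq hqr hp hr => hJ p q r hpq hqr hp hr

/-- The restriction of a persistence module to a subposet. -/
def restrict {P : Type} [Preorder P] (M : PersistenceModule k P) (Q : Set P) :
    PersistenceModule k Q where
  V q := M.V q
  map h := M.map h
  map_refl q := M.map_refl q
  map_trans hxy hyz := M.map_trans hxy hyz

/-- Middle exactness for persistence modules over a product of two totally ordered sets:
for every rectangle `a = (x,y) ≤ b = (x,y'), c = (x',y) ≤ d = (x',y')` the sequence
`M_a → M_b ⊕ M_c → M_d` is exact at `M_b ⊕ M_c`. -/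
def MiddleExact {S T : Type} [Preorder S] [Preorder T]
    (M : PersistenceModule k (S × T)) : Prop :=
  ∀ (x x' : S) (y y' : T) (hx : x ≤ x') (hy : y ≤ y')
    (mb : M.V (x, y')) (mc : M.V (x', y)),
    M.map (show (x, y') ≤ (x', y') from ⟨hx, le_refl y'⟩) mb =
      M.map (show (x', y) ≤ (x', y') from ⟨le_refl x', hy⟩) mc →
    ∃ ma : M.V (x, y),
      M.map (show (x, y) ≤ (x, y') from ⟨le_refl x, hy⟩) ma = mb ∧
      M.map (show (x, y) ≤ (x', y) from ⟨hx, le_refl y⟩) ma = mc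


theorem IsIdeal.isConvex {P : Type} [Preorder P] {I : Set P} (h : IsIdeal I) : IsConvex I :=
  fun _ q r _ hqr _ hr => h q r hqr hr

theorem IsFilter.isConvex {P : Type} [Preorder P] {I : Set P} (h : IsFilter I) : IsConvex I :=
  fun p q _ hpq _ hp _ => h p q hpq hp


/-- Convexity of the preimage of a convex subset of `T` in a subposet of `S × T`. -/
theorem IsConvex.preimageSnd {S T : Type} [Preorder S] [Preorder T] {J : Set T}
    (hJ : IsConvex J) (Q : Set (S × T)) : IsConvex {p : ↥Q | (p : S × T).2 ∈ J} :=
  fun p q r hpq hqr hp hr =>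
    hJ _ _ _ (Subtype.coe_le_coe.mpr hpq).2 (Subtype.coe_le_coe.mpr hqr).2 hp hr

end PMod

namespace PMod

theorem map_map_apply {k : Type} [Field k] {P : Type} [Preorder P] (M : PersistenceModule k P)
    {p q r : P} (h1 : p ≤ q) (h2 : q ≤ r) (v : M.V p) :
    M.map h2 (M.map h1 v) = M.map (h1.trans h2) v := by
  rw [M.map_trans h1 h2]; rfl

/-- In a directed system, an element that never dies is detected by a compatible family of
linear functionals. -/
theorem exists_compatible_functional {k : Type} [Field k] {ι : Type} [Preorder ι]
    [IsDirectedOrder ι] (G : ι → Type) [∀ i, AddCommGroup (G i)] [∀ i, Module k (G i)]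
    (f : ∀ i j, i ≤ j → G i →ₗ[k] G j) (hid : ∀ i (v : G i), f i i le_rfl v = v)
    (hcomp : ∀ i j l (hij : i ≤ j) (hjl : j ≤ l) (v : G i),
      f j l hjl (f i j hij v) = f i l (hij.trans hjl) v)
    (d : ι) (m : G d) (hm : ∀ j (h : d ≤ j), f d j h m ≠ 0) :
    ∃ g : ∀ i, G i →ₗ[k] k, (∀ i j (h : i ≤ j) v, g j (f i j h v) = g i v) ∧ g d m = 1 := by
  classical
  have : DirectedSystem G (fun i j h => f i j h) :=
    ⟨fun i v => hid i v, fun l j i hij hjl v => hcomp i j l hij hjl v⟩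
  have h0 : Module.DirectLimit.of k ι G f d m ≠ 0 := by
    intro h
    obtain ⟨j, hj, e⟩ := Module.DirectLimit.of.zero_exact h
    exact hm j hj e
  obtain ⟨F, -, hF⟩ := LinearMap.exists_extend_of_notMem
    (p := (⊥ : Submodule k (Module.DirectLimit G f))) (0 : _ →ₗ[k] k)
    (v := Module.DirectLimit.of k ι G f d m) (by simpa using h0) 1
  refine ⟨fun i => F.comp (Module.DirectLimit.of k ι G f i), ?_, hF⟩
  intro i j h v
  simp [Module.DirectLimit.of_f]

/-- Functionals on a persistence module vanishing on a subfunctor `K`. -/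
theorem exists_functional {k : Type} [Field k] {P : Type} [Preorder P] [IsDirectedOrder P]
    (M : PersistenceModule k P) (K : ∀ p, Submodule k (M.V p))
    (hK : ∀ p q (h : p ≤ q), K p ≤ (K q).comap (M.map h))
    (d : P) (m : M.V d) (hm : ∀ e (h : d ≤ e), M.map h m ∉ K e) :
    ∃ f : ∀ p, M.V p →ₗ[k] k, (∀ p q (h : p ≤ q) v, f q (M.map h v) = f p v) ∧
      (∀ p, ∀ v ∈ K p, f p v = 0) ∧ f d m = 1 := by
  obtain ⟨g, hg, hg1⟩ := exists_compatible_functional (fun p => M.V p ⧸ K p)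
    (fun p q h => (K p).mapQ (K q) (M.map h) (hK p q h))
    (by
      intro p v
      obtain ⟨v, rfl⟩ := (K p).mkQ_surjective v
      simp [M.map_refl])
    (by
      intro p q r h1 h2 v
      obtain ⟨v, rfl⟩ := (K p).mkQ_surjective v
      simp [map_map_apply])
    d ((K d).mkQ m)
    (by
      intro j h
      simpa using hm j h)
  refine ⟨fun p => (g p).comp (K p).mkQ, ?_, ?_, hg1⟩
  · intro p q h v
    have := hg p q h ((K p).mkQ v)
    simpa using this
  · intro p v hv
    have : (K p).mkQ v = 0 := by simpa using hv
    simp only [LinearMap.comp_apply, this, map_zero]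

/-- A compatible family of vectors on a codirected set, by duality. -/
theorem exists_section {k : Type} [Field k] {P : Type} [Preorder P]
    (M : PersistenceModule k P) (hfd : ∀ p, FiniteDimensional k (M.V p)) (I : Set P)
    (hI : ∀ p ∈ I, ∀ q ∈ I, ∃ r ∈ I, r ≤ p ∧ r ≤ q) (d : P) (hd : d ∈ I)
    (g : M.V d →ₗ[k] k) (hg : ∀ p ∈ I, ∀ h : p ≤ d, g.comp (M.map h) ≠ 0) :
    ∃ m : ∀ p, p ∈ I → M.V p,
      (∀ p q (hp : p ∈ I) (hq : q ∈ I) (h : p ≤ q), M.map h (m p hp) = m q hq) ∧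
      g (m d hd) = 1 := by
  have : IsDirectedOrder (↥I)ᵒᵈ := ⟨by
    intro a b
    obtain ⟨r, hr, h1, h2⟩ := hI (OrderDual.ofDual a).1 (OrderDual.ofDual a).2
      (OrderDual.ofDual b).1 (OrderDual.ofDual b).2
    exact ⟨OrderDual.toDual ⟨r, hr⟩, h1, h2⟩⟩
  obtain ⟨φ, hφ, h1⟩ := exists_compatible_functional (ι := (↥I)ᵒᵈ)
    (fun p => Module.Dual k (M.V (OrderDual.ofDual p).1))
    (fun p q h => (M.map (show (OrderDual.ofDual q).1 ≤ (OrderDual.ofDual p).1 from h)).dualMap)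
    (by
      intro p v
      ext w
      simp [M.map_refl])
    (by
      intro p q r h1 h2 v
      ext w
      simp [map_map_apply])
    (OrderDual.toDual ⟨d, hd⟩) g
    (by
      intro j h
      exact hg (OrderDual.ofDual j).1 (OrderDual.ofDual j).2 h)
  let ψ : ∀ p, p ∈ I → Module.Dual k (Module.Dual k (M.V p)) :=
    fun p hp => φ (OrderDual.toDual ⟨p, hp⟩)
  have hψ : ∀ p q (hp : p ∈ I) (hq : q ∈ I) (h : p ≤ q) (w : Module.Dual k (M.V q)),
      ψ p hp (w.comp (M.map h)) = ψ q hq w := fun p q hp hq h w =>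
    hφ (OrderDual.toDual ⟨q, hq⟩) (OrderDual.toDual ⟨p, hp⟩) h w
  have hψ1 : ψ d hd g = 1 := h1
  clear_value ψ
  refine ⟨fun p hp => (Module.evalEquiv k (M.V p)).symm (ψ p hp), ?_, ?_⟩
  · intro p q hp hq h
    rw [← sub_eq_zero, ← Module.forall_dual_apply_eq_zero_iff k]
    intro w
    rw [map_sub, sub_eq_zero]
    have e : (w.comp (M.map h)) ((Module.evalEquiv k (M.V p)).symm (ψ p hp)) =
      ψ p hp (w.comp (M.map h)) := Module.apply_evalEquiv_symm_apply _ _ _ _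
    have e' : w ((Module.evalEquiv k (M.V q)).symm (ψ q hq)) =
      ψ q hq w := Module.apply_evalEquiv_symm_apply _ _ _ _
    exact e.trans ((hψ p q hp hq h w).trans e'.symm)
  · have e' : g ((Module.evalEquiv k (M.V d)).symm (ψ d hd)) =
      ψ d hd g := Module.apply_evalEquiv_symm_apply _ _ _ _
    exact e'.trans hψ1

open Classical in
theorem intervalMap_coe {k : Type} [Field k] {P : Type} [Preorder P] (I : Set P) {p q : P}
    (h : p ≤ q) (v : kMod k I p) :
    (intervalMap k I h v : k) = if q ∈ I then (v : k) else 0 := by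
  by_cases hq : q ∈ I <;> simp [intervalMap, hq]

/-- The kernel of a family of functionals, as a persistence module. -/
def kerModule {k : Type} [Field k] {P : Type} [Preorder P] (M : PersistenceModule k P)
    (f : ∀ p, M.V p →ₗ[k] k) (hf : ∀ p q (h : p ≤ q) v, f q (M.map h v) = f p v) :
    PersistenceModule k P where
  V p := LinearMap.ker (f p)
  map {p q} h := (M.map h).restrict (fun v hv => by
    simpa [hf p q h v] using hv)
  map_refl p := by
    ext v
    simp [M.map_refl]
  map_trans h1 h2 := by
    ext v
    simp [map_map_apply]

/-- Splitting criterion. -/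
theorem isomorphic_of_split {k : Type} [Field k] {P : Type} [Preorder P]
    (M : PersistenceModule k P) (hind : Indecomposable M) (I : Set P) (hIF : IsFilter I)
    (hI : IsConvex I) (d : P) (hd : d ∈ I)
    (f : ∀ p, M.V p →ₗ[k] k) (hf : ∀ p q (h : p ≤ q) v, f q (M.map h v) = f p v)
    (hf0 : ∀ p, p ∉ I → f p = 0)
    (m : ∀ p, p ∈ I → M.V p)
    (hm : ∀ p q (hp : p ∈ I) (hq : q ∈ I) (h : p ≤ q), M.map h (m p hp) = m q hq)
    (h1 : ∀ p hp, f p (m p hp) = 1) :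
    Isomorphic M (intervalModule k I hI) := by
  classical
  let F : Hom M (intervalModule k I hI) :=
    { app := fun p => (f p).codRestrict (kMod k I p) (by
        intro v
        by_cases hp : p ∈ I
        · simp [kMod, hp]
        · simp [hf0 p hp])
      natural := by
        intro p q h
        refine LinearMap.ext fun v => Subtype.ext ?_
        refine (intervalMap_coe I h _).trans ?_
        change (if q ∈ I then f p v else 0) = f q (M.map h v)
        by_cases hq : q ∈ I
        · simp [hq, hf]
        · simp [hq, hf0 q hq] }
  let m' : ∀ p, M.V p := fun p => if hp : p ∈ I then m p hp else 0
  have hm'1 : ∀ p v, f p (f p v • m' p) = f p v := by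
    intro p v
    by_cases hp : p ∈ I
    · simp [m', hp, h1]
    · simp [hf0 p hp]
  have hm'2 : ∀ p q (h : p ≤ q) (v : M.V p), M.map h (f p v • m' p) = f p v • m' q := by
    intro p q h v
    by_cases hp : p ∈ I
    · have hq := hIF p q h hp
      simp [m', hp, hq, hm p q hp hq h]
    · simp [hf0 p hp]
  let Gker : ∀ p, M.V p →ₗ[k] LinearMap.ker (f p) := fun p =>
    (LinearMap.id - (f p).smulRight (m' p)).codRestrict (LinearMap.ker (f p)) (by
      intro v
      have := hm'1 p v
      rw [LinearMap.mem_ker, LinearMap.sub_apply, map_sub, LinearMap.smulRight_apply, this]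
      simp)
  let H : Hom M (sum2 (intervalModule k I hI) (kerModule M f hf)) :=
    { app := fun p => (F.app p).prod (Gker p)
      natural := by
        intro p q h
        refine LinearMap.ext fun v => Prod.ext ?_ ?_
        · exact LinearMap.congr_fun (F.natural h) v
        · apply Subtype.ext
          change M.map h (v - f p v • m' p) = M.map h v - f q (M.map h v) • m' q
          rw [map_sub, hm'2 p q h v, hf] }
  have hHinj : ∀ p (v : M.V p), H.app p v = 0 → v = 0 := by
    intro p v hv
    have e1 : f p v = 0 := congrArg Subtype.val (congrArg Prod.fst hv)
    have e2 : v - f p v • m' p = 0 := congrArg Subtype.val (congrArg Prod.snd hv)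
    simpa [e1] using e2
  have hH : Isomorphic M (sum2 (intervalModule k I hI) (kerModule M f hf)) := by
    refine ⟨H, fun p => ⟨(injective_iff_map_eq_zero (H.app p)).2 (hHinj p), ?_⟩⟩
    rintro ⟨⟨a, ha⟩, ⟨b, hb⟩⟩
    have hb' : f p b = 0 := hb
    have ham : f p (a • m' p) = a := by
      by_cases hp : p ∈ I
      · simp [m', hp, h1]
      · have : a = 0 := kMod_coe_eq_zero k hp ⟨a, ha⟩
        simp [this]
    refine ⟨a • m' p + b, Prod.ext (Subtype.ext ?_) (Subtype.ext ?_)⟩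
    · change f p (a • m' p + b) = a
      rw [map_add, ham, hb', add_zero]
    · change (a • m' p + b) - f p (a • m' p + b) • m' p = b
      rw [map_add, ham, hb', add_zero]
      simp
  rcases hind.2 _ _ hH with h | h
  · exfalso
    have := congrArg Subtype.val (h d (kGen k hd))
    exact one_ne_zero (α := k) this
  · refine ⟨F, fun p => ⟨(injective_iff_map_eq_zero (F.app p)).2 ?_, ?_⟩⟩
    · intro v hv
      have e1 : f p v = 0 := congrArg Subtype.val hv
      exact congrArg Subtype.val (h p ⟨v, e1⟩)
    · rintro ⟨a, ha⟩
      refine ⟨a • m' p, Subtype.ext ?_⟩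
      change f p (a • m' p) = a
      by_cases hp : p ∈ I
      · simp [m', hp, h1]
      · have : a = 0 := kMod_coe_eq_zero k hp ⟨a, ha⟩
        simp [this]

theorem exists_max_chain {k V S : Type} [Field k] [AddCommGroup V] [Module k V]
    [FiniteDimensional k V] [LinearOrder S] (A : S → Submodule k V) (hA : Monotone A)
    (B : Submodule k V) (s : S) (hs : A s ⊔ B ≠ ⊤) :
    ∃ s0, A s0 ⊔ B ≠ ⊤ ∧ ∀ s, A s ⊔ B ≠ ⊤ → A s ≤ A s0 := by
  obtain ⟨X, ⟨s0, h0, rfl⟩, hmax⟩ := (wellFounded_gt (α := Submodule k V)).has_min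
    {X | ∃ s, A s ⊔ B ≠ ⊤ ∧ A s = X} ⟨A s, s, hs, rfl⟩
  refine ⟨s0, h0, fun s hs => ?_⟩
  rcases le_total s s0 with h | h
  · exact hA h
  · by_contra hlt
    exact hmax (A s) ⟨s, hs, rfl⟩ (lt_of_le_not_ge (hA h) hlt)

theorem mem_iSup_range {k : Type} [Field k] {S : Type} [LinearOrder S]
    (M : PersistenceModule k S) (J : Set S) (p : S) (q : S) (hq : q ∉ J) (hqp : q ≤ p)
    (v : M.V p)
    (hv : v ∈ ⨆ s : {s // s ∉ J ∧ s ≤ p}, LinearMap.range (M.map s.2.2)) :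
    ∃ s, ∃ h : s ≤ p, s ∉ J ∧ ∃ u, M.map h u = v := by
  have : Nonempty {s // s ∉ J ∧ s ≤ p} := ⟨⟨q, hq, hqp⟩⟩
  rw [Submodule.mem_iSup_of_directed] at hv
  · obtain ⟨⟨s, hs, hsp⟩, u, hu⟩ := hv
    exact ⟨s, hsp, hs, u, hu⟩
  · apply Monotone.directed_le
    rintro ⟨s, hs, hsp⟩ ⟨t, ht, htp⟩ hst _ ⟨u, rfl⟩
    exact ⟨M.map (show s ≤ t from hst) u, map_map_apply M _ _ _⟩

/-- Restriction to a horizontal line. -/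
def rowModule {k : Type} [Field k] {S T : Type} [Preorder S] [Preorder T]
    (M : PersistenceModule k (S × T)) (t : T) : PersistenceModule k S where
  V s := M.V (s, t)
  map h := M.map (show (_, t) ≤ (_, t) from ⟨h, le_refl t⟩)
  map_refl s := M.map_refl (s, t)
  map_trans h1 h2 := M.map_trans (show (_, t) ≤ (_, t) from ⟨h1, le_refl t⟩)
    (show (_, t) ≤ (_, t) from ⟨h2, le_refl t⟩)

/-- Restriction to a vertical line. -/
def colModule {k : Type} [Field k] {S T : Type} [Preorder S] [Preorder T]
    (M : PersistenceModule k (S × T)) (s : S) : PersistenceModule k T where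
  V t := M.V (s, t)
  map h := M.map (show (s, _) ≤ (s, _) from ⟨le_refl s, h⟩)
  map_refl t := M.map_refl (s, t)
  map_trans h1 h2 := M.map_trans (show (s, _) ≤ (s, _) from ⟨le_refl s, h1⟩)
    (show (s, _) ≤ (s, _) from ⟨le_refl s, h2⟩)

open Classical in
/-- Images in a chain module at `p`; everything above `p` gives the whole space. -/
noncomputable def chainIm {k : Type} [Field k] {S : Type} [LinearOrder S]
    (M : PersistenceModule k S) (p s : S) : Submodule k (M.V p) :=
  if h : s ≤ p then LinearMap.range (M.map h) else ⊤

theorem chainIm_of_le {k : Type} [Field k] {S : Type} [LinearOrder S]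
    (M : PersistenceModule k S) {p s : S} (h : s ≤ p) :
    chainIm M p s = LinearMap.range (M.map h) := by
  simp [chainIm, h]

theorem chainIm_self {k : Type} [Field k] {S : Type} [LinearOrder S]
    (M : PersistenceModule k S) (p : S) : chainIm M p p = ⊤ := by
  rw [chainIm_of_le M le_rfl, M.map_refl, LinearMap.range_id]

theorem chainIm_mono {k : Type} [Field k] {S : Type} [LinearOrder S]
    (M : PersistenceModule k S) (p : S) : Monotone (chainIm M p) := by
  intro s t hst
  by_cases ht : t ≤ p
  · rw [chainIm_of_le M ht, chainIm_of_le M (hst.trans ht)]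
    rintro _ ⟨u, rfl⟩
    exact ⟨M.map hst u, map_map_apply M _ _ _⟩
  · simp [chainIm, ht]

end PMod

open PMod in
/-- Lemma 4.4: an indecomposable pointwise finite-dimensional middle exact module with
a non-surjective difference map is a block module of type (bb). -/
theorem stmt14 {k : Type} [Field k] {S T : Type} [LinearOrder S] [LinearOrder T]
    (M : PersistenceModule k (S × T)) (hfd : ∀ p, FiniteDimensional k (M.V p))
    (hme : MiddleExact M) (hind : Indecomposable M)
    (x x' : S) (hx : x ≤ x') (y y' : T) (hy : y ≤ y')
    (hns : ¬ Function.Surjective (fun mm : M.V (x, y') × M.V (x', y) =>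
      M.map (show (x, y') ≤ (x', y') from ⟨hx, le_refl y'⟩) mm.1 -
      M.map (show (x', y) ≤ (x', y') from ⟨le_refl x', hy⟩) mm.2)) :
    ∃ (JS : Set S) (JT : Set T)
      (h : (IsIntervalLin JS ∧ IsFilter JS) ∧ (IsIntervalLin JT ∧ IsFilter JT)),
      Isomorphic M (intervalModule k (JS ×ˢ JT) (h.1.1.2.prod h.2.1.2)) := by
  classical
  have : FiniteDimensional k ((rowModule M y').V x') := hfd (x', y')
  let A : S → Submodule k (M.V (x', y')) := chainIm (rowModule M y') x'
  let B : T → Submodule k (M.V (x', y')) := chainIm (colModule M x') y'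
  have hA : Monotone A := chainIm_mono (rowModule M y') x'
  have hB : Monotone B := chainIm_mono (colModule M x') y'
  have hAtop : A x' = ⊤ := chainIm_self (rowModule M y') x'
  have hBtop : B y' = ⊤ := chainIm_self (colModule M x') y'
  have hAr : ∀ s (h : s ≤ x') v, v ∈ A s ↔
      ∃ u, M.map (show (s, y') ≤ (x', y') from ⟨h, le_refl y'⟩) u = v := by
    intro s h v
    change v ∈ chainIm (rowModule M y') x' s ↔ _
    rw [chainIm_of_le (rowModule M y') h]
    exact Iff.rfl
  have hBr : ∀ t (h : t ≤ y') v, v ∈ B t ↔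
      ∃ u, M.map (show (x', t) ≤ (x', y') from ⟨le_refl x', h⟩) u = v := by
    intro t h v
    change v ∈ chainIm (colModule M x') y' t ↔ _
    rw [chainIm_of_le (colModule M x') h]
    exact Iff.rfl
  clear_value A B
  have hxy : A x ⊔ B y ≠ ⊤ := by
    intro h
    apply hns
    intro v
    have hv : v ∈ A x ⊔ B y := by rw [h]; trivial
    obtain ⟨a, ha, b, hb, rfl⟩ := Submodule.mem_sup.1 hv
    obtain ⟨u, rfl⟩ := (hAr x hx a).1 ha
    obtain ⟨w, rfl⟩ := (hBr y hy b).1 hb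
    exact ⟨(u, -w), by simp⟩
  obtain ⟨s0, hs0, hs0max⟩ := exists_max_chain A hA (B y) x hxy
  obtain ⟨t0, ht0, ht0max⟩ := exists_max_chain B hB (A s0) y (by rwa [sup_comm])
  let JS : Set S := {s | A s ⊔ B y = ⊤}
  let JT : Set T := {t | B t ⊔ A s0 = ⊤}
  have hJS : IsFilter JS := fun p q h hp =>
    top_le_iff.1 (le_trans (le_of_eq (Eq.symm hp)) (sup_le_sup_right (hA h) _))
  have hJT : IsFilter JT := fun p q h hp =>
    top_le_iff.1 (le_trans (le_of_eq (Eq.symm hp)) (sup_le_sup_right (hB h) _))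
  have hx'J : x' ∈ JS := by simp [JS, hAtop]
  have hy'J : y' ∈ JT := by simp [JT, hBtop]
  have hxJ : x ∉ JS := hxy
  have hyJ : y ∉ JT := fun h => hs0 (by rw [sup_comm]; exact h)
  have hs0J : s0 ∉ JS := hs0
  have ht0J : t0 ∉ JT := ht0
  have hltS : ∀ {s s'}, s ∉ JS → s' ∈ JS → s ≤ s' := fun {s s'} h h' =>
    le_of_not_ge fun hh => h (hJS s' s hh h')
  have hltT : ∀ {t t'}, t ∉ JT → t' ∈ JT → t ≤ t' := fun {t t'} h h' =>
    le_of_not_ge fun hh => h (hJT t' t hh h')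
  have hAmax : ∀ s, s ∉ JS → A s ≤ A s0 := hs0max
  have hBmax : ∀ t, t ∉ JT → B t ≤ B t0 := ht0max
  have hJSspan : ∀ s, s ∈ JS → A s ⊔ B t0 = ⊤ := fun s hs =>
    top_le_iff.1 (le_trans (le_of_eq (Eq.symm hs)) (sup_le_sup_left (hBmax y hyJ) _))
  have hJTspan : ∀ t, t ∈ JT → B t ⊔ A s0 = ⊤ := fun t ht => ht
  have hIF : IsFilter (JS ×ˢ JT) := fun p q h hp =>
    ⟨hJS _ _ h.1 hp.1, hJT _ _ h.2 hp.2⟩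
  clear_value JS JT
  refine ⟨JS, JT, ⟨⟨⟨⟨x', hx'J⟩, hJS.isConvex⟩, hJS⟩, ⟨⟨⟨y', hy'J⟩, hJT.isConvex⟩, hJT⟩⟩, ?_⟩
  obtain ⟨m, hm⟩ : ∃ m, m ∉ A s0 ⊔ B t0 := by
    by_contra! hcon
    exact ht0 (by rw [sup_comm, eq_top_iff]; exact fun v _ => hcon v)
  let K1 : ∀ p : S × T, Submodule k (M.V p) := fun p =>
    ⨆ s : {s // s ∉ JS ∧ s ≤ p.1}, LinearMap.range ((rowModule M p.2).map s.2.2)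
  let K2 : ∀ p : S × T, Submodule k (M.V p) := fun p =>
    ⨆ t : {t // t ∉ JT ∧ t ≤ p.2}, LinearMap.range ((colModule M p.1).map t.2.2)
  have hK1 : ∀ p q (h : p ≤ q), K1 p ≤ (K1 q).comap (M.map h) := by
    intro p q h
    refine iSup_le ?_
    rintro ⟨s, hs, hsp⟩ _ ⟨u, rfl⟩
    refine Submodule.mem_iSup_of_mem (⟨s, hs, hsp.trans h.1⟩ : {s // s ∉ JS ∧ s ≤ q.1}) ?_
    refine ⟨M.map (show (s, p.2) ≤ (s, q.2) from ⟨le_rfl, h.2⟩) u, ?_⟩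
    exact (map_map_apply M (p := (s, p.2)) (q := (s, q.2)) (r := q) _ _ u).trans
      (map_map_apply M (p := (s, p.2)) (q := p) (r := q) _ _ u).symm
  have hK2 : ∀ p q (h : p ≤ q), K2 p ≤ (K2 q).comap (M.map h) := by
    intro p q h
    refine iSup_le ?_
    rintro ⟨t, ht, htp⟩ _ ⟨u, rfl⟩
    refine Submodule.mem_iSup_of_mem (⟨t, ht, htp.trans h.2⟩ : {t // t ∉ JT ∧ t ≤ q.2}) ?_
    refine ⟨M.map (show (p.1, t) ≤ (q.1, t) from ⟨h.1, le_rfl⟩) u, ?_⟩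
    exact (map_map_apply M (p := (p.1, t)) (q := (q.1, t)) (r := q) _ _ u).trans
      (map_map_apply M (p := (p.1, t)) (q := p) (r := q) _ _ u).symm
  have hdir : IsDirectedOrder (S × T) := inferInstance
  obtain ⟨f, hf, hfK, hfm⟩ := exists_functional M (fun p => K1 p ⊔ K2 p)
    (fun p q h => sup_le ((hK1 p q h).trans (Submodule.comap_mono le_sup_left))
      ((hK2 p q h).trans (Submodule.comap_mono le_sup_right))) (x', y') m (by
    rintro ⟨s, t⟩ hst hmem
    have hs : x' ≤ s := hst.1
    have ht : y' ≤ t := hst.2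
    obtain ⟨a, ha, b, hb, hab⟩ := Submodule.mem_sup.1 hmem
    obtain ⟨s', hs's, hs'J, u, hu⟩ := mem_iSup_range (rowModule M t) JS s x hxJ (hx.trans hs) a ha
    obtain ⟨t', ht't, ht'J, v, hv⟩ := mem_iSup_range (colModule M s) JT t y hyJ (hy.trans ht) b hb
    have hs'x : s' ≤ x' := hltS hs'J hx'J
    have ht'y : t' ≤ y' := hltT ht'J hy'J
    change M.V (s', t) at u
    change M.V (s, t') at v
    change M.map (show (s', t) ≤ (s, t) from ⟨hs's, le_rfl⟩) u = a at hu
    change M.map (show (s, t') ≤ (s, t) from ⟨le_rfl, ht't⟩) v = b at hv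
    obtain ⟨w, hw1, hw2⟩ := hme x' s t' t hs ht't
      (M.map (show (x', y') ≤ (x', t) from ⟨le_rfl, ht⟩) m -
        M.map (show (s', t) ≤ (x', t) from ⟨hs'x, le_rfl⟩) u) v (by
        rw [map_sub, map_map_apply, map_map_apply, hu, hv, ← hab]
        abel)
    obtain ⟨z, hz1, hz2⟩ := hme s' x' y' t hs'x ht u
      (m - M.map (show (x', t') ≤ (x', y') from ⟨le_rfl, ht'y⟩) w) (by
        rw [map_sub, map_map_apply, hw1]
        abel)
    apply hm
    have e : m = M.map (show (s', y') ≤ (x', y') from ⟨hs'x, le_rfl⟩) z +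
        M.map (show (x', t') ≤ (x', y') from ⟨le_rfl, ht'y⟩) w := by
      rw [hz2]; abel
    rw [e]
    exact Submodule.add_mem_sup (hAmax s' hs'J ((hAr s' hs'x _).2 ⟨z, rfl⟩))
      (hBmax t' ht'J ((hBr t' ht'y _).2 ⟨w, rfl⟩)))
  have hf0 : ∀ p, p ∉ JS ×ˢ JT → f p = 0 := by
    rintro ⟨s, t⟩ hp
    ext v
    apply hfK
    by_cases hs : s ∈ JS
    · have ht : t ∉ JT := fun ht => hp ⟨hs, ht⟩
      refine Submodule.mem_sup_right ?_
      refine Submodule.mem_iSup_of_mem (⟨t, ht, le_rfl⟩ : {t' // t' ∉ JT ∧ t' ≤ t}) ?_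
      exact ⟨v, LinearMap.congr_fun (M.map_refl (s, t)) v⟩
    · refine Submodule.mem_sup_left ?_
      refine Submodule.mem_iSup_of_mem (⟨s, hs, le_rfl⟩ : {s' // s' ∉ JS ∧ s' ≤ s}) ?_
      exact ⟨v, LinearMap.congr_fun (M.map_refl (s, t)) v⟩
  have hfA : ∀ v ∈ A s0, f (x', y') v = 0 := by
    intro v hv
    obtain ⟨u, rfl⟩ := (hAr s0 (hltS hs0J hx'J) v).1 hv
    rw [hf, hf0 (s0, y') (fun h => hs0J h.1)]
    rfl
  have hfB : ∀ v ∈ B t0, f (x', y') v = 0 := by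
    intro v hv
    obtain ⟨u, rfl⟩ := (hBr t0 (hltT ht0J hy'J) v).1 hv
    rw [hf, hf0 (x', t0) (fun h => ht0J h.2)]
    rfl
  obtain ⟨mm, hmm, hmm1⟩ := exists_section M hfd (JS ×ˢ JT) (by
      rintro ⟨s, t⟩ ⟨hs, ht⟩ ⟨s', t'⟩ ⟨hs', ht'⟩
      refine ⟨(s ⊓ s', t ⊓ t'), ⟨?_, ?_⟩, ⟨inf_le_left, inf_le_left⟩, ⟨inf_le_right, inf_le_right⟩⟩
      · rcases min_choice s s' with h | h <;> simp only [h] <;> assumption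
      · rcases min_choice t t' with h | h <;> simp only [h] <;> assumption)
    (x', y') ⟨hx'J, hy'J⟩ (f (x', y')) (by
      rintro ⟨s, t⟩ ⟨hs, ht⟩ hle h0
      have hsx : s ≤ x' := hle.1
      have hty : t ≤ y' := hle.2
      have h1 : m ∈ B t ⊔ A s0 := by rw [hJTspan t ht]; trivial
      obtain ⟨b, hb, a0, ha0, hba⟩ := Submodule.mem_sup.1 h1
      have h2 : b ∈ A s ⊔ B t0 := by rw [hJSspan s hs]; trivial
      obtain ⟨a, ha, b0, hb0, hab⟩ := Submodule.mem_sup.1 h2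
      have haB : a ∈ B t := by
        have : a = b - b0 := by rw [← hab]; abel
        rw [this]
        exact Submodule.sub_mem _ hb (hB (hltT ht0J ht) hb0)
      obtain ⟨u, hu⟩ := (hAr s hsx a).1 ha
      obtain ⟨w, hw⟩ := (hBr t hty a).1 haB
      obtain ⟨z, hz1, hz2⟩ := hme s x' t y' hsx hty u w (hu.trans hw.symm)
      have hz : M.map hle z = a := by
        rw [← hu, ← hz1, map_map_apply]
      have hfa : f (x', y') a = 0 := by
        rw [← hz]
        exact LinearMap.congr_fun h0 z
      have : f (x', y') m = 0 := by
        rw [← hba, ← hab, map_add, map_add, hfa, hfA a0 ha0, hfB b0 hb0]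
        simp
      rw [hfm] at this
      exact one_ne_zero this)
  refine isomorphic_of_split M hind (JS ×ˢ JT) hIF _ (x', y') ⟨hx'J, hy'J⟩ f hf hf0 mm hmm ?_
  intro p hp
  have hp1 : p ≤ p ⊔ (x', y') := le_sup_left
  have hd1 : (x', y') ≤ p ⊔ (x', y') := le_sup_right
  have hq := hIF _ _ hp1 hp
  rw [← hf _ _ hp1, hmm p _ hp hq hp1, ← hmm (x', y') _ ⟨hx'J, hy'J⟩ hq hd1, hf _ _ hd1]
  exact hmm1
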